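/- For every finite abstract simplicial complex G with connection matrix L and dual connection matrix L̄ = J - L (where J is the all-ones matrix), one has det(-L·L̄) = 1 - χ(G). -/

import Mathlib

/-!
Let `U` be the zeta matrix of the face poset of `G`, `ω` the vector of simplex signs and
`D = diag ω`. A full simplex on a nonempty vertex set has Euler characteristic `1`; applied to
`x ∩ y` this gives `L = Uᵀ D U` (`connectionMatrix_eq`), and applied to `x` it gives
`J = Uᵀ ω ωᵀ U` (`allOnesMatrix_eq`). Hence `L - J = Uᵀ (D - ω ωᵀ) U = Uᵀ D (1 - 𝟙 ωᵀ) U`.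
Since `det U = 1` (`det_faceMatrix`), `det D = ±1`, and `det (1 - 𝟙 ωᵀ) = 1 - χ(G)`, the
determinant of `-L (J - L) = L (L - J)` is `(det D)² (1 - χ(G)) = 1 - χ(G)`.
-/

/-- The connection matrix (over `ℚ`) of a finite abstract simplicial complex `G`:
`L x y = 1` if `x ∩ y ≠ ∅` and `L x y = 0` otherwise. -/
def connectionMatrix {V : Type} [DecidableEq V] (G : Finset (Finset V)) :
    Matrix G G ℚ :=
  Matrix.of fun x y => if ((x : Finset V) ∩ (y : Finset V)).Nonempty then 1 else 0

/-- The all-ones matrix indexed by the simplices of `G`. -/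
def allOnesMatrix {V : Type} [DecidableEq V] (G : Finset (Finset V)) :
    Matrix G G ℚ :=
  Matrix.of fun _ _ => 1

/-- The sign `ω(x) = (-1)^(|x|-1)` of a simplex. -/
def simplexSign {V : Type} (x : Finset V) : ℚ := (-1) ^ (x.card - 1)

/-- The zeta matrix of the face poset: `U z x = 1` if `z ⊆ x`, else `0`. -/
def faceMatrix {V : Type} [DecidableEq V] (G : Finset (Finset V)) : Matrix G G ℚ :=
  Matrix.of fun z x => if (z : Finset V) ⊆ (x : Finset V) then 1 else 0

/-- The full simplex on a nonempty vertex set has Euler characteristic `1`. -/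
theorem sum_faces_simplexSign {V : Type} [DecidableEq V] (s : Finset V) (hs : s.Nonempty) :
    ∑ z ∈ s.powerset.erase ∅, simplexSign z = 1 := by
  have h : ∑ z ∈ s.powerset, (-1 : ℚ) ^ z.card = 0 := by
    exact_mod_cast Finset.sum_powerset_neg_one_pow_card_of_nonempty hs
  rw [← Finset.add_sum_erase _ _ (Finset.empty_mem_powerset s)] at h
  have h2 : ∑ z ∈ s.powerset.erase ∅, (-1 : ℚ) ^ z.card
      = - ∑ z ∈ s.powerset.erase ∅, simplexSign z := by
    rw [← Finset.sum_neg_distrib]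
    refine Finset.sum_congr rfl fun z hz => ?_
    have hz0 : 0 < z.card := Finset.card_pos.2
      (Finset.nonempty_iff_ne_empty.2 (Finset.ne_of_mem_erase hz))
    obtain ⟨k, hk⟩ := Nat.exists_eq_succ_of_ne_zero hz0.ne'
    simp [simplexSign, hk, pow_succ]
  rw [h2] at h
  simp only [Finset.card_empty, pow_zero] at h
  linarith

/-- If every nonempty subset of `s` is a simplex of `G`, the signs of the simplices of `G`
contained in `s` add up to `1`, or to `0` when `s` is empty. -/
theorem sum_simplexSign_subset {V : Type} [DecidableEq V] (G : Finset (Finset V))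
    (hne : ∀ x ∈ G, x ≠ ∅) (s : Finset V) (hs : ∀ y ⊆ s, y ≠ ∅ → y ∈ G) :
    ∑ z : G, (if (z : Finset V) ⊆ s then simplexSign (z : Finset V) else 0)
      = if s.Nonempty then 1 else 0 := by
  rw [Finset.sum_coe_sort G (fun z => if z ⊆ s then simplexSign z else 0),
    ← Finset.sum_filter]
  have hG : G.filter (· ⊆ s) = s.powerset.erase ∅ := by
    ext y
    simp only [Finset.mem_filter, Finset.mem_erase, Finset.mem_powerset]
    exact ⟨fun h => ⟨hne y h.1, h.2⟩, fun h => ⟨hs y h.2 h.1, h.2⟩⟩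
  rw [hG]
  split_ifs with h
  · exact sum_faces_simplexSign s h
  · rw [Finset.not_nonempty_iff_eq_empty] at h
    subst h
    simp

/-- The face matrix is unitriangular when simplices are ordered by cardinality. -/
theorem det_faceMatrix {V : Type} [DecidableEq V] (G : Finset (Finset V)) :
    (faceMatrix G).det = 1 := by
  have hT : (faceMatrix G).BlockTriangular (fun x : G => (x : Finset V).card) := by
    intro z x hlt
    simp only [faceMatrix, Matrix.of_apply, ite_eq_right_iff]
    intro hzx
    exact absurd (Finset.card_le_card hzx) (not_le.2 hlt)
  rw [hT.det]
  refine Finset.prod_eq_one fun k _ => ?_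
  have h1 : (faceMatrix G).toSquareBlock (fun x : G => (x : Finset V).card) k = 1 := by
    ext ⟨z, hz⟩ ⟨x, hx⟩
    simp only [Matrix.toSquareBlock_def, faceMatrix, Matrix.of_apply, Matrix.one_apply,
      Subtype.mk.injEq]
    refine if_congr ⟨fun h => ?_, fun h => h ▸ Finset.Subset.refl _⟩ rfl rfl
    exact Subtype.ext (Finset.eq_of_subset_of_card_le h (hx.trans hz.symm).le)
  rw [h1, Matrix.det_one]

/-- `L = Uᵀ D U`: the entry at `(x, y)` is the Euler characteristic of the full simplex on
`x ∩ y`. -/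
theorem connectionMatrix_eq {V : Type} [DecidableEq V] (G : Finset (Finset V))
    (hne : ∀ x ∈ G, x ≠ ∅)
    (hsub : ∀ x ∈ G, ∀ y : Finset V, y ⊆ x → y ≠ ∅ → y ∈ G) :
    connectionMatrix G = (faceMatrix G).transpose *
      Matrix.diagonal (fun x : G => simplexSign (x : Finset V)) * faceMatrix G := by
  ext x y
  rw [Matrix.mul_apply]
  simp only [Matrix.mul_diagonal, Matrix.transpose_apply, connectionMatrix, faceMatrix,
    Matrix.of_apply]
  rw [← sum_simplexSign_subset G hne _ (fun z hz h0 =>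
    hsub x x.2 z (hz.trans Finset.inter_subset_left) h0)]
  refine Finset.sum_congr rfl fun z _ => ?_
  simp only [Finset.subset_inter_iff]
  split_ifs <;> simp_all

/-- `J = Uᵀ (ω ωᵀ) U`, because every column of `U` has `ω`-weighted sum `1`. -/
theorem allOnesMatrix_eq {V : Type} [DecidableEq V] (G : Finset (Finset V))
    (hne : ∀ x ∈ G, x ≠ ∅)
    (hsub : ∀ x ∈ G, ∀ y : Finset V, y ⊆ x → y ≠ ∅ → y ∈ G) :
    allOnesMatrix G = (faceMatrix G).transpose *
      Matrix.vecMulVec (fun x : G => simplexSign (x : Finset V))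
        (fun x : G => simplexSign (x : Finset V)) * faceMatrix G := by
  have hcol (x : G) : ∑ z : G, (if (z : Finset V) ⊆ x then simplexSign (z : Finset V) else 0)
      = 1 := by
    rw [sum_simplexSign_subset G hne _ (hsub x x.2),
      if_pos (Finset.nonempty_iff_ne_empty.2 (hne x x.2))]
  rw [Matrix.mul_vecMulVec, Matrix.vecMulVec_mul]
  ext x y
  simp only [Matrix.vecMulVec_apply, Matrix.mulVec, Matrix.vecMul, dotProduct, faceMatrix,
    allOnesMatrix, Matrix.of_apply, Matrix.transpose_apply, ite_mul, mul_ite, one_mul, zero_mul,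
    mul_one, mul_zero, hcol]

/-- For the connection matrix `L` and the dual connection matrix `L̄ = J - L`
(`J` the all-ones matrix), one has `det(-L·L̄) = 1 - χ(G)`. -/
theorem det_neg_connection_mul_dual {V : Type} [DecidableEq V]
    (G : Finset (Finset V))
    (hne : ∀ x ∈ G, x ≠ ∅)
    (hsub : ∀ x ∈ G, ∀ y : Finset V, y ⊆ x → y ≠ ∅ → y ∈ G) :
    (-(connectionMatrix G * (allOnesMatrix G - connectionMatrix G))).det
      = 1 - ∑ x ∈ G, (-1 : ℚ) ^ (x.card - 1) := by
  set ω : G → ℚ := fun x => simplexSign (x : Finset V) with hω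
  have hfac : -(connectionMatrix G * (allOnesMatrix G - connectionMatrix G))
      = ((faceMatrix G).transpose * Matrix.diagonal ω * faceMatrix G) *
        ((faceMatrix G).transpose *
          (Matrix.diagonal ω * (1 - Matrix.vecMulVec 1 ω)) * faceMatrix G) := by
    have hD : Matrix.diagonal ω * (1 - Matrix.vecMulVec 1 ω)
        = Matrix.diagonal ω - Matrix.vecMulVec ω ω := by
      rw [mul_sub, mul_one]
      congr 1
      ext x y
      simp [Matrix.diagonal_mul, Matrix.vecMulVec_apply]
    rw [hD, mul_sub (faceMatrix G).transpose, sub_mul, ← connectionMatrix_eq G hne hsub,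
      ← allOnesMatrix_eq G hne hsub, ← mul_neg, neg_sub]
  have hsq : (Matrix.diagonal ω).det * (Matrix.diagonal ω).det = 1 := by
    rw [Matrix.det_diagonal, ← Finset.prod_mul_distrib]
    refine Finset.prod_eq_one fun x _ => ?_
    simp only [hω, simplexSign, ← mul_pow]
    norm_num
  have hrank : (1 - Matrix.vecMulVec 1 ω).det = 1 - ∑ x ∈ G, (-1 : ℚ) ^ (x.card - 1) := by
    have h := Matrix.det_one_sub_mul_comm (Matrix.replicateCol Unit (1 : G → ℚ))
      (Matrix.replicateRow Unit ω)
    rw [← Matrix.vecMulVec_eq] at h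
    rw [h, Matrix.det_unique, ← Finset.sum_coe_sort G]
    simp [Matrix.mul_apply, hω, simplexSign]
  rw [hfac]
  simp only [Matrix.det_mul, Matrix.det_transpose, det_faceMatrix, one_mul, mul_one]
  rw [← mul_assoc, hsq, one_mul, hrank]
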